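/- Let X be a geodesic metric space that is quasi-isometric to an ℝ-tree via an (L, C)-quasi-isometry. Then X satisfies the bottleneck property: there exists δ > 0 such that for all x, y ∈ X there is a point m with d(x,m) = d(m,y) = d(x,y)/2 and every continuous path from x to y in X passes within distance δ of m. -/

import Mathlib

/-- `γ` restricted to `[0,l]` is an isometric embedding. -/
def GeoOn {T : Type*} [MetricSpace T] (γ : ℝ → T) (l : ℝ) : Prop :=
  ∀ s ∈ Set.Icc (0 : ℝ) l, ∀ t ∈ Set.Icc (0 : ℝ) l, dist (γ s) (γ t) = |s - t|

def UniqArc (T : Type*) [MetricSpace T] : Prop :=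
  ∀ (x y : T) (γ₁ γ₂ : Path x y), Function.Injective γ₁ →
      Function.Injective γ₂ → Set.range γ₁ = Set.range γ₂

theorem GeoOn.clamp_continuous {T : Type*} [MetricSpace T] {γ : ℝ → T} {l : ℝ} (hl : 0 ≤ l)
    (h : GeoOn γ l) : Continuous (fun s => γ (max 0 (min l s))) := by
  have hc : ContinuousOn γ (Set.Icc 0 l) := by
    apply LipschitzOnWith.continuousOn (K := 1)
    apply LipschitzOnWith.of_dist_le_mul
    intro s hs t ht
    rw [h s hs t ht, Real.dist_eq]
    simp
  apply hc.comp_continuous (by fun_prop)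
  intro s
  exact ⟨le_max_left _ _, max_le hl (min_le_left _ _)⟩

/-- An injective continuous function on `[0,l]` gives an injective path with the same range. -/
theorem exists_path {T : Type*} [MetricSpace T] {g : ℝ → T} {l : ℝ} (hl : 0 < l)
    (hg : Continuous g) (hi : Set.InjOn g (Set.Icc 0 l)) {a b : T} (ha : g 0 = a) (hb : g l = b) :
    ∃ γ : Path a b, Function.Injective γ ∧ Set.range γ = g '' Set.Icc 0 l := by
  refine ⟨⟨⟨fun t => g (l * t), by fun_prop⟩, by simp [ha], by simp [hb]⟩, ?_, ?_⟩
  · intro s t hst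
    have hs := s.2
    have ht := t.2
    have := @hi (l * s) ⟨by nlinarith [hs.1], by nlinarith [hs.2]⟩ (l * t)
      ⟨by nlinarith [ht.1], by nlinarith [ht.2]⟩ hst
    exact Subtype.ext (mul_left_cancel₀ hl.ne' this)
  · ext z
    constructor
    · rintro ⟨t, rfl⟩
      have ht := t.2
      exact ⟨l * t, ⟨by nlinarith [ht.1], by nlinarith [ht.2]⟩, rfl⟩
    · rintro ⟨s, hs, rfl⟩
      refine ⟨⟨s / l, div_nonneg hs.1 hl.le, (div_le_one hl).2 hs.2⟩, ?_⟩
      change g (l * (s / l)) = g s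
      congr 1
      field_simp

theorem concat_mem {T : Type*} [MetricSpace T] (hU : UniqArc T) {γ₁ γ₂ τ : ℝ → T} {l₁ l₂ : ℝ}
    (h1 : 0 ≤ l₁) (h2 : 0 ≤ l₂) (g1 : GeoOn γ₁ l₁) (g2 : GeoOn γ₂ l₂) (hq : γ₁ l₁ = γ₂ 0)
    (hmeet : ∀ s ∈ Set.Icc 0 l₁, ∀ t ∈ Set.Icc 0 l₂, γ₁ s = γ₂ t → s = l₁ ∧ t = 0)
    {a b : T} (ha : γ₁ 0 = a) (hb : γ₂ l₂ = b)
    (gτ : GeoOn τ (dist a b)) (hτa : τ 0 = a) (hτb : τ (dist a b) = b) :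
    ∃ u ∈ Set.Icc 0 (dist a b), τ u = γ₂ 0 := by
  by_cases hab : a = b
  · obtain ⟨e1, e2⟩ := hmeet 0 ⟨le_rfl, h1⟩ l₂ ⟨h2, le_rfl⟩ (by rw [ha, hb, hab])
    refine ⟨0, ⟨le_rfl, dist_nonneg⟩, ?_⟩
    rw [hτa, ← hq, ← e1, ha]
  have hd : 0 < dist a b := dist_pos.2 hab
  have hl : 0 < l₁ + l₂ := by
    rcases h1.lt_or_eq with h | h
    · linarith
    rcases h2.lt_or_eq with h' | h'
    · linarith
    exfalso; apply hab
    rw [← ha, ← hb, ← h', ← hq, ← h]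
  -- the geodesic path
  have cl : ∀ {l s : ℝ}, 0 ≤ s → s ≤ l → max 0 (min l s) = s := by
    intro l s hs hs'
    rw [min_eq_right hs', max_eq_right hs]
  obtain ⟨P, hPi, hPr⟩ := exists_path hd (gτ.clamp_continuous hd.le) (by
    intro s hs t ht hst
    simp only [cl hs.1 hs.2, cl ht.1 ht.2] at hst
    have := gτ s hs t ht
    rw [hst, dist_self] at this
    linarith [abs_eq_zero.1 this.symm]) (a := a) (b := b)
    (by simp only [cl le_rfl hd.le, hτa]) (by simp only [cl hd.le le_rfl, hτb])
  let c : ℝ → T := fun s => if s ≤ l₁ then γ₁ (max 0 (min l₁ s)) else γ₂ (max 0 (min l₂ (s - l₁)))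
  have hcc : Continuous c := by
    apply Continuous.if_le (g1.clamp_continuous h1)
      ((g2.clamp_continuous h2).comp (continuous_id.sub continuous_const)) continuous_id
      continuous_const
    intro s hs
    simp only [id] at hs
    subst hs
    simp [h1, h2, hq]
  have c1 : ∀ s, 0 ≤ s → s ≤ l₁ → c s = γ₁ s := by
    intro s hs hs'
    simp only [c, if_pos hs', cl hs hs']
  have c2 : ∀ s, l₁ < s → s ≤ l₁ + l₂ → c s = γ₂ (s - l₁) := by
    intro s hs hs'
    simp only [c, if_neg (not_le.2 hs), cl (show 0 ≤ s - l₁ by linarith)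
      (show s - l₁ ≤ l₂ by linarith)]
  obtain ⟨Q, hQi, hQr⟩ := exists_path hl hcc (by
    intro s hs t ht hst
    rcases le_or_gt s l₁ with h | h <;> rcases le_or_gt t l₁ with h' | h'
    · rw [c1 s hs.1 h, c1 t ht.1 h'] at hst
      have := g1 s ⟨hs.1, h⟩ t ⟨ht.1, h'⟩
      rw [hst, dist_self] at this
      linarith [abs_eq_zero.1 this.symm]
    · rw [c1 s hs.1 h, c2 t h' ht.2] at hst
      have := hmeet s ⟨hs.1, h⟩ (t - l₁) ⟨by linarith, by linarith [ht.2]⟩ hst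
      linarith [this.1, this.2]
    · rw [c2 s h hs.2, c1 t ht.1 h'] at hst
      have := hmeet t ⟨ht.1, h'⟩ (s - l₁) ⟨by linarith, by linarith [hs.2]⟩ hst.symm
      linarith [this.1, this.2]
    · rw [c2 s h hs.2, c2 t h' ht.2] at hst
      have := g2 (s - l₁) ⟨by linarith, by linarith [hs.2]⟩ (t - l₁)
        ⟨by linarith, by linarith [ht.2]⟩
      rw [hst, dist_self] at this
      linarith [abs_eq_zero.1 this.symm]) (a := a) (b := b)
    (by rw [c1 0 le_rfl h1, ha])
    (by
      rcases h2.lt_or_eq with h | h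
      · rw [c2 _ (by linarith) le_rfl, ← hb]; congr 1; ring
      · rw [← h, add_zero, c1 _ h1 le_rfl, hq, ← hb, ← h])
  have hmem : γ₂ 0 ∈ Set.range Q := by
    rw [hQr]
    exact ⟨l₁, ⟨h1, by linarith⟩, by rw [c1 _ h1 le_rfl, hq]⟩
  rw [← hU a b P Q hPi hQi, hPr] at hmem
  obtain ⟨u, hu, hu'⟩ := hmem
  simp only [cl hu.1 hu.2] at hu'
  exact ⟨u, hu, hu'⟩

/-- `p` lies in the metric interval between `a` and `b`. -/
def MBtw {T : Type*} [MetricSpace T] (a p b : T) : Prop := dist a p + dist p b = dist a b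

def IsGeo (T : Type*) [MetricSpace T] : Prop := ∀ x y : T, ∃ γ : ℝ → T, γ 0 = x ∧
  γ (dist x y) = y ∧ GeoOn γ (dist x y)

theorem GeoOn.dist_left {T : Type*} [MetricSpace T] {a b : T} {γ : ℝ → T}
    (h0 : γ 0 = a) (h : GeoOn γ (dist a b)) {s : ℝ} (hs : s ∈ Set.Icc 0 (dist a b)) :
    dist a (γ s) = s := by
  have := h 0 ⟨le_rfl, dist_nonneg⟩ s hs
  rw [h0, zero_sub, abs_neg, abs_of_nonneg hs.1] at this
  exact this

theorem GeoOn.dist_right {T : Type*} [MetricSpace T] {a b : T} {γ : ℝ → T}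
    (h1 : γ (dist a b) = b) (h : GeoOn γ (dist a b)) {s : ℝ} (hs : s ∈ Set.Icc 0 (dist a b)) :
    dist (γ s) b = dist a b - s := by
  have := h s hs (dist a b) ⟨dist_nonneg, le_rfl⟩
  rw [h1, abs_sub_comm, abs_of_nonneg (by linarith [hs.2])] at this
  exact this

theorem MBtw.exists_geo {T : Type*} [MetricSpace T] (hU : UniqArc T) (hG : IsGeo T) {a p b : T}
    (hp : MBtw a p b) {τ : ℝ → T} (gτ : GeoOn τ (dist a b)) (hτa : τ 0 = a)
    (hτb : τ (dist a b) = b) : ∃ u ∈ Set.Icc 0 (dist a b), τ u = p := by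
  obtain ⟨γ₁, a0, a1, g1⟩ := hG a p
  obtain ⟨γ₂, b0, b1, g2⟩ := hG p b
  obtain ⟨u, hu, h⟩ := concat_mem hU dist_nonneg dist_nonneg g1 g2 (a1.trans b0.symm) (by
    intro s hs t ht hst
    have e1 := g1.dist_left a0 hs
    have e2 := g1.dist_right a1 hs
    have e3 := g2.dist_left b0 ht
    have e4 := g2.dist_right b1 ht
    have e5 := dist_triangle a (γ₁ s) b
    rw [hst] at e1 e2 e5
    unfold MBtw at hp
    have := hs.2
    have := ht.1
    constructor <;> linarith) a0 b1 gτ hτa hτb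
  exact ⟨u, hu, h.trans b0⟩

theorem MBtw.split {T : Type*} [MetricSpace T] (hU : UniqArc T) (hG : IsGeo T) {a p b : T}
    (hp : MBtw a p b) (c : T) : MBtw a p c ∨ MBtw c p b := by
  obtain ⟨τ, t0, t1, gτ⟩ := hG a b
  obtain ⟨σ, s0, s1, gσ⟩ := hG c a
  obtain ⟨ρ, r0, r1, gρ⟩ := hG c b
  obtain ⟨v, hv, hvp⟩ := hp.exists_geo hU hG gτ t0 t1
  have cont : ∀ {γ : ℝ → T} {l : ℝ}, GeoOn γ l → ContinuousOn γ (Set.Icc 0 l) := by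
    intro γ l h
    apply LipschitzOnWith.continuousOn (K := 1)
    apply LipschitzOnWith.of_dist_le_mul
    intro s hs t ht
    rw [h s hs t ht, Real.dist_eq]
    simp
  have hcl : IsClosed (τ '' Set.Icc 0 (dist a b)) :=
    (isCompact_Icc.image_of_continuousOn (cont gτ)).isClosed
  have hS : IsCompact (Set.Icc 0 (dist c a) ∩ σ ⁻¹' (τ '' Set.Icc 0 (dist a b))) :=
    isCompact_Icc.of_isClosed_subset ((cont gσ).preimage_isClosed_of_isClosed isClosed_Icc hcl)
      Set.inter_subset_left
  obtain ⟨w, ⟨hw, u, hu, huw⟩, hmin⟩ := hS.exists_isLeast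
    ⟨dist c a, ⟨dist_nonneg, le_rfl⟩, 0, ⟨le_rfl, dist_nonneg⟩, by rw [t0, s1]⟩
  obtain ⟨z, hz, hzq⟩ := concat_mem hU (γ₁ := σ) (γ₂ := fun t => τ (u + t)) (l₁ := w)
    (l₂ := dist a b - u) hw.1 (by linarith [hu.2])
    (fun s hs t ht => gσ s ⟨hs.1, hs.2.trans hw.2⟩ t ⟨ht.1, ht.2.trans hw.2⟩)
    (fun s hs t ht => by
      have := gτ (u + s) ⟨by linarith [hu.1, hs.1], by linarith [hs.2]⟩ (u + t)
        ⟨by linarith [hu.1, ht.1], by linarith [ht.2]⟩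
      simpa using this)
    (by simp [huw])
    (by
      intro s hs t ht hst
      have ht' : u + t ∈ Set.Icc 0 (dist a b) := ⟨by linarith [hu.1, ht.1], by linarith [ht.2]⟩
      have h1 : w ≤ s := hmin ⟨⟨hs.1, hs.2.trans hw.2⟩, u + t, ht', hst.symm⟩
      have h2 : s = w := le_antisymm hs.2 h1
      refine ⟨h2, ?_⟩
      have := gτ u hu (u + t) ht'
      rw [← hst, h2, huw, dist_self] at this
      linarith [abs_eq_zero.1 this.symm])
    s0 (by simp [t1]) gρ r0 r1
  simp only [add_zero] at hzq
  have e1 := gρ.dist_left r0 hz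
  have e2 := gρ.dist_right r1 hz
  have e3 := gσ.dist_left s0 hw
  have e4 := gσ.dist_right s1 hw
  have e5 := gτ.dist_left t0 hu
  have e6 := gτ.dist_right t1 hu
  have e7 := gτ.dist_left t0 hv
  have e8 := gτ.dist_right t1 hv
  have e9 := gτ v hv u hu
  rw [hzq] at e1 e2
  rw [← huw] at e3 e4
  rw [hvp] at e7 e8 e9
  unfold MBtw
  rcases le_total v u with h | h
  · left
    rw [abs_sub_comm, abs_of_nonneg (by linarith)] at e9
    have i1 := dist_triangle p (τ u) c
    have i2 := dist_triangle a p c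
    rw [dist_comm c (τ u)] at e3
    rw [dist_comm c a] at e4
    rw [dist_comm (τ u) a] at e4
    linarith
  · right
    rw [abs_of_nonneg (by linarith)] at e9
    have i1 := dist_triangle c (τ u) p
    have i2 := dist_triangle c p b
    rw [dist_comm p (τ u)] at e9
    linarith

theorem coarse_path {X T S : Type*} [MetricSpace X] [MetricSpace T] (hU : UniqArc T)
    (hG : IsGeo T) [TopologicalSpace S] [PreconnectedSpace S] (g : S → X) (hg : Continuous g)
    (f : X → T) (K : ℝ) (hK : 0 ≤ K) (hf : ∀ x y, dist x y < 1 → dist (f x) (f y) ≤ K)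
    (s₀ s₁ : S) {p : T} (hp : MBtw (f (g s₀)) p (f (g s₁))) : ∃ s, dist (f (g s)) p ≤ K := by
  by_contra! hcon
  have step : ∀ s t, dist (g s) (g t) < 1 → MBtw (f (g s₀)) p (f (g s)) →
      MBtw (f (g s₀)) p (f (g t)) := by
    intro s t hst h
    rcases h.split hU hG (f (g t)) with h | h
    · exact h
    · exfalso
      unfold MBtw at h
      have h1 := hf _ _ hst
      have h2 := hcon t
      rw [dist_comm (f (g s))] at h1
      linarith [dist_nonneg (x := p) (y := f (g s))]
  have hnear : ∀ s, ∀ᶠ t in nhds s, dist (g s) (g t) < 1 := by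
    intro s
    have : Continuous fun t => dist (g s) (g t) := by fun_prop
    exact this.continuousAt.eventually_lt continuousAt_const (by simp)
  have hclopen : IsClopen {s | MBtw (f (g s₀)) p (f (g s))} := by
    constructor
    · rw [← isOpen_compl_iff, isOpen_iff_mem_nhds]
      intro s hs
      filter_upwards [hnear s] with t ht h
      exact hs (step t s (by rwa [dist_comm]) h)
    · rw [isOpen_iff_mem_nhds]
      intro s hs
      filter_upwards [hnear s] with t ht
      exact step s t ht hs
  rcases isClopen_iff.1 hclopen with h | h
  · have : s₁ ∈ {s | MBtw (f (g s₀)) p (f (g s))} := hp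
    rw [h] at this
    exact this
  · have : s₀ ∈ {s | MBtw (f (g s₀)) p (f (g s))} := by rw [h]; trivial
    have h' : dist (f (g s₀)) p + dist p (f (g s₀)) = dist (f (g s₀)) (f (g s₀)) := this
    rw [dist_self] at h'
    linarith [hcon s₀, dist_nonneg (x := p) (y := f (g s₀))]


/-- a geodesic metric space `(L,C)`-quasi-isometric to an ℝ-tree satisfies the
bottleneck property. -/
theorem bottleneck_of_quasiIsometric_to_real_tree {X T : Type*}
    [MetricSpace X] [MetricSpace T]
    (hXgeo : ∀ x y : X, ∃ γ : ℝ → X, γ 0 = x ∧ γ (dist x y) = y ∧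
      ∀ s ∈ Set.Icc (0 : ℝ) (dist x y), ∀ t ∈ Set.Icc (0 : ℝ) (dist x y),
        dist (γ s) (γ t) = |s - t|)
    (hTgeo : ∀ x y : T, ∃ γ : ℝ → T, γ 0 = x ∧ γ (dist x y) = y ∧
      ∀ s ∈ Set.Icc (0 : ℝ) (dist x y), ∀ t ∈ Set.Icc (0 : ℝ) (dist x y),
        dist (γ s) (γ t) = |s - t|)
    (hTuniq : ∀ (x y : T) (γ₁ γ₂ : Path x y), Function.Injective γ₁ →
      Function.Injective γ₂ → Set.range γ₁ = Set.range γ₂)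
    (L C : ℝ) (hL : 1 ≤ L) (hC : 0 ≤ C) (f : X → T)
    (hqi : ∀ x y : X, (1 / L) * dist x y - C ≤ dist (f x) (f y) ∧
      dist (f x) (f y) ≤ L * dist x y + C)
    (honto : ∀ t : T, ∃ x : X, dist t (f x) ≤ C) :
    ∃ δ : ℝ, 0 < δ ∧ ∀ x y : X, ∃ m : X,
      dist x m = dist x y / 2 ∧ dist m y = dist x y / 2 ∧
      ∀ γ : Path x y, ∃ t : unitInterval, dist (γ t) m ≤ δ := by
  have hU : UniqArc T := hTuniq
  have hG : IsGeo T := hTgeo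
  have hL0 : 0 < L := by linarith
  obtain ⟨K, hKdef⟩ : ∃ K, K = L + C := ⟨_, rfl⟩
  have hK : 0 ≤ K := by linarith
  have hf : ∀ x y, dist x y < 1 → dist (f x) (f y) ≤ K := by
    intro x y h
    have := (hqi x y).2
    nlinarith
  have hlow : ∀ x y, dist x y ≤ L * (dist (f x) (f y) + C) := by
    intro x y
    have h := (hqi x y).1
    have h2 : (1 / L) * dist x y ≤ dist (f x) (f y) + C := by linarith
    calc dist x y = L * ((1 / L) * dist x y) := by field_simp
      _ ≤ _ := mul_le_mul_of_nonneg_left h2 hL0.le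
  obtain ⟨M, hM⟩ : ∃ M, M = L * (2 * K + 1 + C) := ⟨_, rfl⟩
  have hM0 : 0 ≤ M := by rw [hM]; positivity
  obtain ⟨R, hR⟩ : ∃ R, R = L * M + C + K := ⟨_, rfl⟩
  have hR0 : 0 ≤ R := by rw [hR]; positivity
  refine ⟨L * (K + R + C) + 1, by positivity, ?_⟩
  intro x y
  obtain ⟨σ, σ0, σ1, gσ⟩ := hXgeo x y
  have gσ' : GeoOn σ (dist x y) := gσ
  have hD : 0 ≤ dist x y := dist_nonneg
  have hmid : dist x y / 2 ∈ Set.Icc 0 (dist x y) := ⟨by linarith, by linarith⟩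
  refine ⟨σ (dist x y / 2), gσ'.dist_left σ0 hmid, ?_, ?_⟩
  · rw [gσ'.dist_right σ1 hmid]; ring
  intro γ
  obtain ⟨τ, τ0, τ1, gτ⟩ := hG (f x) (f y)
  have hbtw : ∀ u ∈ Set.Icc 0 (dist (f x) (f y)), MBtw (f x) (τ u) (f y) := by
    intro u hu
    unfold MBtw
    rw [gτ.dist_left τ0 hu, gτ.dist_right τ1 hu]; ring
  have hE : 0 ≤ dist (f x) (f y) := dist_nonneg
  -- points of the geodesic of `X` near each point of the geodesic of `T`
  have hnear : ∀ u ∈ Set.Icc 0 (dist (f x) (f y)), ∃ s ∈ Set.Icc 0 (dist x y),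
      dist (f (σ s)) (τ u) ≤ K := by
    intro u hu
    obtain ⟨s, hs⟩ := coarse_path hU hG (fun s : ℝ => σ (max 0 (min (dist x y) s)))
      (gσ'.clamp_continuous hD) f K hK hf 0 (dist x y) (p := τ u) (by
        have := hbtw u hu
        simpa [σ0, σ1, hD] using this)
    exact ⟨_, ⟨le_max_left _ _, max_le hD (min_le_left _ _)⟩, hs⟩
  let A : Set ℝ := {u | u ∈ Set.Icc 0 (dist (f x) (f y)) ∧ ∃ s ∈ Set.Icc 0 (dist x y),
    s ≤ dist x y / 2 ∧ dist (f (σ s)) (τ u) ≤ K}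
  let B : Set ℝ := {u | u ∈ Set.Icc 0 (dist (f x) (f y)) ∧ ∃ s ∈ Set.Icc 0 (dist x y),
    dist x y / 2 ≤ s ∧ dist (f (σ s)) (τ u) ≤ K}
  have hA0 : (0 : ℝ) ∈ A := ⟨⟨le_rfl, hE⟩, 0, ⟨le_rfl, hD⟩, by linarith, by simp [σ0, τ0, hK]⟩
  have hB1 : dist (f x) (f y) ∈ B :=
    ⟨⟨hE, le_rfl⟩, dist x y, ⟨hD, le_rfl⟩, by linarith, by simp [σ1, τ1, hK]⟩
  obtain ⟨u, hu, huA, huB⟩ := isPreconnected_closed_iff.1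
    (isPreconnected_Icc (a := (0 : ℝ)) (b := dist (f x) (f y))) (closure A) (closure B)
    isClosed_closure isClosed_closure (by
      intro u hu
      obtain ⟨s, hs, h⟩ := hnear u hu
      rcases le_total s (dist x y / 2) with h' | h'
      · exact Or.inl (subset_closure ⟨hu, s, hs, h', h⟩)
      · exact Or.inr (subset_closure ⟨hu, s, hs, h', h⟩))
    ⟨0, ⟨le_rfl, hE⟩, subset_closure hA0⟩ ⟨_, ⟨hE, le_rfl⟩, subset_closure hB1⟩
  obtain ⟨u₁, ⟨hu₁, s₁, hs₁, hs₁', hd₁⟩, h₁⟩ := Metric.mem_closure_iff.1 huA (1 / 2) (by norm_num)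
  obtain ⟨u₂, ⟨hu₂, s₂, hs₂, hs₂', hd₂⟩, h₂⟩ := Metric.mem_closure_iff.1 huB (1 / 2) (by norm_num)
  have h12 : dist (τ u₁) (τ u₂) ≤ 1 := by
    rw [gτ u₁ hu₁ u₂ hu₂, ← Real.dist_eq]
    have := dist_triangle_left u₁ u₂ u
    linarith
  have hff : dist (f (σ s₁)) (f (σ s₂)) ≤ 2 * K + 1 := by
    have i1 := dist_triangle4 (f (σ s₁)) (τ u₁) (τ u₂) (f (σ s₂))
    rw [dist_comm (τ u₂) (f (σ s₂))] at i1
    linarith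
  have hss : dist (σ s₁) (σ s₂) ≤ M := by
    rw [hM]
    exact (hlow _ _).trans (mul_le_mul_of_nonneg_left (by linarith) hL0.le)
  have hm1 : dist (σ (dist x y / 2)) (σ s₁) ≤ M := by
    rw [gσ s₁ hs₁ s₂ hs₂, abs_sub_comm, abs_of_nonneg (by linarith)] at hss
    rw [gσ _ hmid s₁ hs₁, abs_of_nonneg (by linarith)]
    linarith
  have hfm : dist (f (σ (dist x y / 2))) (τ u₁) ≤ R := by
    have i1 := dist_triangle (f (σ (dist x y / 2))) (f (σ s₁)) (τ u₁)
    have i2 := (hqi (σ (dist x y / 2)) (σ s₁)).2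
    have i3 := mul_le_mul_of_nonneg_left hm1 hL0.le
    linarith
  obtain ⟨t, ht⟩ := coarse_path hU hG γ γ.continuous f K hK hf 0 1 (p := τ u₁) (by
    simpa using hbtw u₁ hu₁)
  refine ⟨t, ?_⟩
  have i1 := dist_triangle_right (f (γ t)) (f (σ (dist x y / 2))) (τ u₁)
  have i2 := hlow (γ t) (σ (dist x y / 2))
  have i3 : L * (dist (f (γ t)) (f (σ (dist x y / 2))) + C) ≤ L * (K + R + C) :=
    mul_le_mul_of_nonneg_left (by linarith) hL0.le
  linarith
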